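/- arXiv:2402.03938 — 6 statements merged into one kernel-verified Lean document; each statement's English description precedes it below -/
import Mathlib

section
/- For any polynomial f in A_{q^v}(r_1,…,r_s) with coefficient hypermatrix M(f), the apparent distance of the polynomial f equals the apparent distance of the hypermatrix M(f): d*(f) = d*(M(f)). -/
open Classical

noncomputable section

namespace AbelianCodes

/-- The index set `I = Z_{r 0} × ⋯ × Z_{r (s-1)}`. -/
abbrev Idx {s : ℕ} (r : Fin s → ℕ) : Type := ∀ k, ZMod (r k)

variable {F : Type*} [Field F]

/-- The support of a hypermatrix. -/
def hsupp {s : ℕ} {r : Fin s → ℕ} (M : Idx r → F) : Set (Idx r) := {i | M i ≠ 0}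

/-- The hypercolumn `H_M(k,b)` of a hypermatrix, viewed as an `(s-1)`-dimensional
hypermatrix indexed by `∏_{j ≠ k} Z_{r j}`. -/
def hypercol {s : ℕ} {r : Fin (s+1) → ℕ} (M : Idx r → F) (k : Fin (s+1)) (b : ZMod (r k)) :
    Idx (fun j => r (k.succAbove j)) → F :=
  fun i => M (k.insertNth b i)

/-- `ω_M(k,b)`: the number of consecutive zero hypercolumns
`H_M(k,b+1), H_M(k,b+2), …` (indices modulo `r k`). -/
def runLen {s : ℕ} {r : Fin (s+1) → ℕ} (M : Idx r → F) (k : Fin (s+1)) (b : ZMod (r k)) : ℕ :=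
  ((Finset.Ico 1 (r k)).filter
    (fun j => ∀ m : ℕ, m ∈ Finset.Icc 1 j → hypercol M k (b + (m : ZMod (r k))) = 0)).card

/-- The apparent distance `d*(M)` of a hypermatrix, defined recursively on the
number of variables.  (A `0`-dimensional hypermatrix is a scalar, of apparent
distance `1` if nonzero and `0` otherwise; with this convention the `1`-dimensional
case becomes `max {ω_M(b)+1 : a_b ≠ 0}` and the higher-dimensional case becomes
`max_k max {(ω_M(k,b)+1)·d*(H_M(k,b)) : H_M(k,b) ≠ 0}`, since zero hypermatrices
have apparent distance `0`.) -/
def apd : {s : ℕ} → (r : Fin s → ℕ) → (Idx r → F) → ℕ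
  | 0, _, M => if M finZeroElim = 0 then 0 else 1
  | _+1, r, M =>
      Finset.univ.sup fun k =>
        Finset.univ.sup fun b : Fin (r k) =>
          (runLen M k ((b : ℕ) : ZMod (r k)) + 1) *
            apd (fun j => r (k.succAbove j)) (hypercol M k ((b : ℕ) : ZMod (r k)))

/-- The `q^t`-orbit `Q_t(a)` of `a ∈ I`. -/
def qOrbit {s : ℕ} (r : Fin s → ℕ) (q t : ℕ) (a : Idx r) : Set (Idx r) :=
  {i | ∃ n : ℕ, ∀ k, i k = (q : ZMod (r k)) ^ (t * n) * a k}

/-- `D` is a union of `q^t`-orbits. -/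
def OrbitUnion {s : ℕ} (r : Fin s → ℕ) (q t : ℕ) (D : Set (Idx r)) : Prop :=
  ∀ a ∈ D, qOrbit r q t a ⊆ D

/-- The hypermatrix afforded by `D ⊆ I`: entry `0` at indices in `D`, entry `1` elsewhere. -/
def afforded {s : ℕ} (r : Fin s → ℕ) (D : Set (Idx r)) : Idx r → F :=
  fun i => if i ∈ D then 0 else 1

/-- `M` is a `q^t`-orbits hypermatrix, i.e. the hypermatrix afforded by some union
of `q^t`-orbits. -/
def IsOrbitMx {s : ℕ} (r : Fin s → ℕ) (q t : ℕ) (M : Idx r → F) : Prop :=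
  ∃ D : Set (Idx r), OrbitUnion r q t D ∧ M = afforded r D

/-- The minimum apparent distance `mad(M) = min {d*(P) : P a q^t-orbits hypermatrix,
`0 ≠ P ≤ M`}`, where `P ≤ M` means `supp P ⊆ supp M`. -/
def mad {s : ℕ} (r : Fin s → ℕ) (q t : ℕ) (M : Idx r → F) : ℕ :=
  sInf {d | ∃ P : Idx r → F, IsOrbitMx r q t P ∧ P ≠ 0 ∧ hsupp P ⊆ hsupp M ∧ apd r P = d}

/-- The `q^t`-cyclotomic coset of `b` modulo `r`. -/
def cycCoset (r q t : ℕ) (b : ZMod r) : Set (ZMod r) :=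
  {x | ∃ n : ℕ, x = (q : ZMod r) ^ (t * n) * b}


/-- The degree in the variable `x k` of a (reduced) polynomial with coefficient
function `g`. -/
def pdeg {L : Type*} [Field L] {s : ℕ} {r : Fin s → ℕ} (g : Idx r → L) (k : Fin s) : ℕ :=
  sSup {d | ∃ i, g i ≠ 0 ∧ (i k).val = d}

/-- The apparent distance `d*(f)` of a polynomial `f ∈ A_{q^v}(r_1,…,r_s)`, given by
its coefficient function:  `d*(0) = 0`; a nonzero constant (`s = 0`) has apparent
distance `1`; and for `s ≥ 1`,
`d*(f) = max_{h ∈ I} max_k d*(c_k[h]) · (r_k − d_k[h])`, where `d_k[h]` is the degree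
in `x k` of `X^h · f` (reduced modulo `⟨x_j^{r_j} − 1⟩`, i.e. of the shifted
coefficient function `i ↦ f (i − h)`) and `c_k[h]` is the coefficient of
`x_k^{d_k[h]}` therein.  (With the convention `d*` of a nonzero constant is `1`, the
`s = 1` case gives `max_h (r − d[h])`, as in Camion's definition.) -/
def pApd {L : Type*} [Field L] : {s : ℕ} → (r : Fin s → ℕ) → (Idx r → L) → ℕ
  | 0, _, f => if f finZeroElim = 0 then 0 else 1
  | s+1, r, f =>
      sSup {d | ∃ (h : Idx r) (k : Fin (s+1)), d =
        (r k - pdeg (fun i => f (i - h)) k) *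
          pApd (fun j => r (k.succAbove j))
            (hypercol (fun i => f (i - h)) k ((pdeg (fun i => f (i - h)) k : ZMod (r k))))}

theorem hypercol_shift {L : Type*} [Field L] {s : ℕ} {r : Fin (s+1) → ℕ} (f : Idx r → L)
    (h : Idx r) (k : Fin (s+1)) (b : ZMod (r k)) :
    hypercol (fun i => f (i - h)) k b =
      fun i => hypercol f k (b - h k) (i - fun j => h (k.succAbove j)) := by
  funext i
  simp only [hypercol]
  congr 1
  funext j
  refine Fin.succAboveCases k ?_ (fun j => ?_) j
  · simp
  · simp

theorem pApd_shift {L : Type*} [Field L] {s : ℕ} (r : Fin s → ℕ) (f : Idx r → L) (h : Idx r) :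
    pApd r (fun i => f (i - h)) = pApd r f := by
  cases s with
  | zero =>
    simp only [pApd]
    have : (finZeroElim - h : Idx r) = finZeroElim := Subsingleton.elim _ _
    simp only [this]
  | succ s =>
    simp only [pApd]
    congr 1
    ext d
    constructor
    · rintro ⟨h', k, hd⟩
      refine ⟨h' + h, k, ?_⟩
      simpa only [sub_sub] using hd
    · rintro ⟨h', k, hd⟩
      refine ⟨h' - h, k, ?_⟩
      simpa only [sub_sub, sub_add_cancel] using hd

theorem le_runLen {L : Type*} [Field L] {s : ℕ} {r : Fin (s+1) → ℕ} (M : Idx r → L)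
    (k : Fin (s+1)) (b : ZMod (r k)) (n : ℕ) (hn : n < r k)
    (h : ∀ m : ℕ, 1 ≤ m → m ≤ n → hypercol M k (b + (m : ZMod (r k))) = 0) :
    n ≤ runLen M k b := by
  have : Finset.Icc 1 n ⊆ ((Finset.Ico 1 (r k)).filter
    (fun j => ∀ m : ℕ, m ∈ Finset.Icc 1 j → hypercol M k (b + (m : ZMod (r k))) = 0)) := by
    intro j hj
    simp only [Finset.mem_Icc, Finset.mem_filter, Finset.mem_Ico] at hj ⊢
    exact ⟨⟨hj.1, by omega⟩, fun m hm => h m hm.1 (by omega)⟩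
  have := Finset.card_le_card this
  simpa [runLen] using this

theorem runLen_lt {L : Type*} [Field L] {s : ℕ} {r : Fin (s+1) → ℕ} (M : Idx r → L)
    (k : Fin (s+1)) (b : ZMod (r k)) (hr : 0 < r k) : runLen M k b < r k := by
  have h : runLen M k b ≤ (Finset.Ico 1 (r k)).card := by
    unfold runLen
    refine Finset.card_le_card (fun x hx => ?_)
    simp only [Finset.mem_filter] at hx
    exact hx.1
  rw [Nat.card_Ico] at h
  omega

theorem runLen_spec {L : Type*} [Field L] {s : ℕ} {r : Fin (s+1) → ℕ} (M : Idx r → L)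
    (k : Fin (s+1)) (b : ZMod (r k)) (m : ℕ) (h1 : 1 ≤ m) (h2 : m ≤ runLen M k b) :
    hypercol M k (b + (m : ZMod (r k))) = 0 := by
  by_contra hne
  have : ((Finset.Ico 1 (r k)).filter
    (fun j => ∀ m : ℕ, m ∈ Finset.Icc 1 j → hypercol M k (b + (m : ZMod (r k))) = 0))
      ⊆ Finset.Ico 1 m := by
    intro j hj
    simp only [Finset.mem_Icc, Finset.mem_filter, Finset.mem_Ico] at hj ⊢
    refine ⟨hj.1.1, ?_⟩
    by_contra hjm
    exact hne (hj.2 m ⟨h1, by omega⟩)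
  have := Finset.card_le_card this
  rw [Nat.card_Ico] at this
  have h3 : runLen M k b ≤ m - 1 := this
  omega

theorem apd_zero {L : Type*} [Field L] : ∀ {s : ℕ} (r : Fin s → ℕ),
    apd r (0 : Idx r → L) = 0
  | 0, r => by simp [apd]
  | s+1, r => by
    simp only [apd]
    refine Nat.le_zero.mp (Finset.sup_le fun k _ => Finset.sup_le fun b _ => ?_)
    have : hypercol (0 : Idx r → L) k ((b : ℕ) : ZMod (r k)) = 0 := rfl
    rw [this, apd_zero]
    simp

theorem pdeg_bdd {L : Type*} [Field L] {s : ℕ} {r : Fin s → ℕ} (hr : ∀ k, 0 < r k)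
    (g : Idx r → L) (k : Fin s) : BddAbove {d | ∃ i, g i ≠ 0 ∧ (i k).val = d} := by
  refine ⟨r k, ?_⟩
  rintro d ⟨i, -, rfl⟩
  haveI : NeZero (r k) := ⟨(hr k).ne'⟩
  exact (ZMod.val_lt _).le

theorem le_pdeg {L : Type*} [Field L] {s : ℕ} {r : Fin (s+1) → ℕ} (hr : ∀ k, 0 < r k)
    (g : Idx r → L) (k : Fin (s+1)) (d : ℕ) (hd : d < r k)
    (hne : hypercol g k (d : ZMod (r k)) ≠ 0) : d ≤ pdeg g k := by
  obtain ⟨i, hi⟩ := Function.ne_iff.mp hne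
  refine le_csSup (pdeg_bdd hr g k) ⟨k.insertNth (d : ZMod (r k)) i, hi, ?_⟩
  rw [Fin.insertNth_apply_same, ZMod.val_natCast_of_lt hd]

theorem pdeg_lt {L : Type*} [Field L] {s : ℕ} {r : Fin (s+1) → ℕ} (hr : ∀ k, 0 < r k)
    (g : Idx r → L) (k : Fin (s+1)) : pdeg g k < r k := by
  have : pdeg g k ≤ r k - 1 := by
    refine csSup_le' ?_
    rintro d ⟨i, -, rfl⟩
    haveI : NeZero (r k) := ⟨(hr k).ne'⟩
    have := ZMod.val_lt (i k)
    omega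
  have := hr k
  omega

theorem main_aux {L : Type*} [Field L] : ∀ {s : ℕ} (r : Fin s → ℕ) (_ : ∀ k, 0 < r k)
    (f : Idx r → L), pApd r f = apd r f
  | 0, r, _, f => by simp [apd, pApd]
  | s+1, r, hr, f => by
    have key : ∀ (h : Idx r) (k : Fin (s+1)),
        (r k - pdeg (fun i => f (i - h)) k) *
          pApd (fun j => r (k.succAbove j))
            (hypercol (fun i => f (i - h)) k ((pdeg (fun i => f (i - h)) k : ZMod (r k)))) =
        (r k - pdeg (fun i => f (i - h)) k) *
          apd (fun j => r (k.succAbove j))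
            (hypercol f k ((pdeg (fun i => f (i - h)) k : ZMod (r k)) - h k)) := by
      intro h k
      rw [hypercol_shift, pApd_shift (fun j => r (k.succAbove j)),
        main_aux _ (fun j => hr _)]
    have ub : ∀ (h : Idx r) (k : Fin (s+1)),
        (r k - pdeg (fun i => f (i - h)) k) *
          apd (fun j => r (k.succAbove j))
            (hypercol f k ((pdeg (fun i => f (i - h)) k : ZMod (r k)) - h k)) ≤ apd r f := by
      intro h k
      haveI : NeZero (r k) := ⟨(hr k).ne'⟩
      set d := pdeg (fun i => f (i - h)) k with hd
      have hdlt : d < r k := pdeg_lt hr _ k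
      set b : ZMod (r k) := (d : ZMod (r k)) - h k with hb
      have hrun : r k - d ≤ runLen f k b + 1 := by
        have := le_runLen f k b (r k - 1 - d) (by omega) (by
          intro m h1 h2
          by_contra hne
          have hz : hypercol (fun i => f (i - h)) k (((d + m : ℕ)) : ZMod (r k)) ≠ 0 := by
            rw [hypercol_shift]
            obtain ⟨i, hi⟩ := Function.ne_iff.mp hne
            refine Function.ne_iff.mpr ⟨i + fun j => h (k.succAbove j), ?_⟩
            have e : ((d + m : ℕ) : ZMod (r k)) - h k = b + (m : ZMod (r k)) := by
              rw [hb]; push_cast; ring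
            rw [e, add_sub_cancel_right]
            exact hi
          have := le_pdeg hr _ k (d + m) (by omega) hz
          omega)
        omega
      have hle : (runLen f k b + 1) * apd (fun j => r (k.succAbove j)) (hypercol f k b)
          ≤ apd r f := by
        have e : (((⟨b.val, ZMod.val_lt b⟩ : Fin (r k)) : ℕ) : ZMod (r k)) = b := by simp
        conv_rhs => rw [apd]
        refine le_trans ?_ (Finset.le_sup (Finset.mem_univ k))
        refine le_trans ?_ (Finset.le_sup (Finset.mem_univ (⟨b.val, ZMod.val_lt b⟩ : Fin (r k))))
        rw [e]
      exact (Nat.mul_le_mul_right _ hrun).trans hle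
    rw [pApd]
    simp only [key]
    apply le_antisymm
    · refine csSup_le' ?_
      rintro _ ⟨h, k, rfl⟩
      exact ub h k
    · conv_lhs => rw [apd]
      refine Finset.sup_le fun k _ => Finset.sup_le fun b' _ => ?_
      generalize ((b' : ℕ) : ZMod (r k)) = b
      haveI : NeZero (r k) := ⟨(hr k).ne'⟩
      by_cases hz : hypercol f k b = 0
      · rw [hz, apd_zero]; simp
      have hw := runLen_lt f k b (hr k)
      set w := runLen f k b with hwd
      refine le_csSup ⟨apd r f, ?_⟩ ?_
      · rintro _ ⟨h, k, rfl⟩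
        exact ub h k
      set h : Idx r := fun j => if e : j = k then e ▸ (((r k - 1 - w : ℕ) : ZMod (r k)) - b) else 0
        with hh
      have hk : h k = ((r k - 1 - w : ℕ) : ZMod (r k)) - b := by simp [hh]
      have hdeg : pdeg (fun i => f (i - h)) k = r k - 1 - w := by
        apply le_antisymm
        · refine csSup_le' ?_
          rintro d ⟨i, hi, rfl⟩
          by_contra hlt
          have hv := ZMod.val_lt (i k)
          have hs := runLen_spec f k b ((i k).val - (r k - 1 - w)) (by omega) (by omega)
          have e : b + (((i k).val - (r k - 1 - w) : ℕ) : ZMod (r k)) = (i - h) k := by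
            rw [Pi.sub_apply, hk, Nat.cast_sub (by omega), ZMod.natCast_zmod_val]; ring
          rw [e] at hs
          apply hi
          have := congrFun hs (fun j => (i - h) (k.succAbove j))
          simp only [hypercol, Pi.zero_apply] at this
          rw [← this]
          refine congrArg f ?_
          exact (Fin.insertNth_self_removeNth k (i - h)).symm
        · refine le_pdeg hr _ k _ (by omega) ?_
          rw [hypercol_shift, hk, sub_sub_cancel]
          obtain ⟨i, hi⟩ := Function.ne_iff.mp hz
          refine Function.ne_iff.mpr ⟨i + fun j => h (k.succAbove j), ?_⟩
          rw [add_sub_cancel_right]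
          exact hi
      refine ⟨h, k, ?_⟩
      rw [hdeg, hk, sub_sub_cancel]
      congr 1
      omega

/-- For any polynomial `f ∈ A_{q^v}(r_1,…,r_s)` with coefficient
hypermatrix `M(f)` (which, in the coefficient-function picture, is `f` itself),
the apparent distance of the polynomial equals the apparent distance of its
coefficient hypermatrix: `d*(f) = d*(M(f))`. -/
theorem apparentDistance_polynomial_eq_hypermatrix
    {s : ℕ} (r : Fin s → ℕ) (hr : ∀ k, 0 < r k)
    (p m v : ℕ) (hp : p.Prime) (hm : 0 < m) (hv : 0 < v)
    {L : Type*} [Field L] [Fintype L] (hcard : Fintype.card L = (p ^ m) ^ v)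
    (hpr : ∀ k, ¬ p ∣ r k)
    (f : Idx r → L) :
    pApd r f = apd r f := by
  exact main_aux r hr f

end AbelianCodes
end
end

section
/- Let C be an abelian code in A_q(r_1,…,r_s) and let e be its generating idempotent. Then for every α ∈ U, d_α*(C) = mad(M(φ_{α,e})), and consequently d*(C) = max{mad(M(φ_{α,e})) : α ∈ U}. -/
open Classical

noncomputable section

namespace AbelianCodes

variable {F : Type*} [Field F]

variable {F : Type*} [Field F] {L : Type*} [Field L] [Algebra F L]

/-- An abelian code: a subspace of the group algebra `F[∏ Z_{r k}]` (identified
with the space of coefficient functions `I → F`) which is closed under all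
translations, i.e. an ideal. -/
def IsAbelianCode {s : ℕ} {r : Fin s → ℕ} (C : Submodule F (Idx r → F)) : Prop :=
  ∀ f ∈ C, ∀ a : Idx r, (fun i => f (i - a)) ∈ C

/-- Convolution: the multiplication of the group algebra in the coefficient
function picture. -/
def conv {s : ℕ} {r : Fin s → ℕ} [∀ k, NeZero (r k)] (f g : Idx r → F) : Idx r → F :=
  fun i => ∑ u : Idx r, f u * g (i - u)

/-- The (discrete) Fourier transform `φ_{α,f}(j) = f(α^j)` of a coefficient
function `f : I → F` with respect to `α`, with values in the extension `L`. -/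
def fourier {s : ℕ} {r : Fin s → ℕ} [∀ k, NeZero (r k)] (α : Fin s → L) (f : Idx r → F) :
    Idx r → L :=
  fun j => ∑ i : Idx r, algebraMap F L (f i) * ∏ k, α k ^ ((i k).val * (j k).val)

/-- The Hamming weight of a codeword. -/
def wt {s : ℕ} {r : Fin s → ℕ} [∀ k, NeZero (r k)] (f : Idx r → F) : ℕ :=
  (Finset.univ.filter fun i : Idx r => f i ≠ 0).card

/-- The minimum distance of a code. -/
def dmin {s : ℕ} {r : Fin s → ℕ} [∀ k, NeZero (r k)] (C : Submodule F (Idx r → F)) : ℕ :=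
  sInf {w | ∃ f ∈ C, f ≠ (0 : Idx r → F) ∧ wt f = w}

/-- The defining set `D_α(C) = {a ∈ I : f(α^a) = 0 for all f ∈ C}`. -/
def defSet {s : ℕ} (r : Fin s → ℕ) [∀ k, NeZero (r k)] (α : Fin s → L)
    (C : Submodule F (Idx r → F)) : Set (Idx r) :=
  {a | ∀ f ∈ C, fourier α f a = 0}

/-- The apparent distance of a code `C` with respect to `α`:
`d_α*(C) = min {d*(M(φ_{α,e})) : 0 ≠ e = e² ∈ C}`. -/
def dStarAlpha {s : ℕ} (r : Fin s → ℕ) [∀ k, NeZero (r k)] (α : Fin s → L)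
    (C : Submodule F (Idx r → F)) : ℕ :=
  sInf {d | ∃ e, e ∈ C ∧ e ≠ (0 : Idx r → F) ∧ conv e e = e ∧ apd r (fourier α e) = d}

/-- The apparent distance of a code: `d*(C) = max {d_β*(C) : β ∈ U}`, where `U`
is the set of tuples of primitive roots of unity in `L`. -/
def dStarCode {s : ℕ} (r : Fin s → ℕ) [∀ k, NeZero (r k)] (L : Type*) [Field L] [Algebra F L]
    (C : Submodule F (Idx r → F)) : ℕ :=
  sSup {d | ∃ α : Fin s → L, (∀ k, IsPrimitiveRoot (α k) (r k)) ∧ dStarAlpha r α C = d}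

/-- The defining set of the multivariate BCH code `B_q(α,γ,δ,b)`:
`∪_{k∈γ} ∪_{l=0}^{δ_k−2} ∪_{i ∈ I(k, b_k+l)} Q(i)`. -/
def bchDefSet {s : ℕ} (r : Fin s → ℕ) (q : ℕ) (γ : Finset (Fin s)) (δ b : Fin s → ℕ) :
    Set (Idx r) :=
  ⋃ k ∈ γ, ⋃ l ∈ Finset.range (δ k - 1),
    ⋃ i ∈ {i : Idx r | i k = ((b k + l : ℕ) : ZMod (r k))}, qOrbit r q 1 i


/-- the pairing -/
def chi {s : ℕ} {r : Fin s → ℕ} (α : Fin s → L) (i j : Idx r) : L :=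
  ∏ k, α k ^ ((i k).val * (j k).val)

theorem chi_comm {s : ℕ} {r : Fin s → ℕ} (α : Fin s → L) (i j : Idx r) :
    chi α i j = chi α j i := by
  simp only [chi, mul_comm]

theorem chi_add {s : ℕ} {r : Fin s → ℕ} [∀ k, NeZero (r k)] (α : Fin s → L)
    (hα : ∀ k, IsPrimitiveRoot (α k) (r k)) (i i' j : Idx r) :
    chi α (i + i') j = chi α i j * chi α i' j := by
  simp only [chi, ← Finset.prod_mul_distrib]
  refine Finset.prod_congr rfl fun k _ => ?_
  have h1 : ((α k) ^ (j k).val) ^ (r k) = 1 := by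
    rw [← pow_mul, mul_comm, pow_mul, (hα k).pow_eq_one, one_pow]
  rw [mul_comm, pow_mul, mul_comm (i k).val, pow_mul, mul_comm (i' k).val, pow_mul, ← pow_add,
    Pi.add_apply, ZMod.val_add, ← pow_eq_pow_mod _ h1]

theorem chi_zero {s : ℕ} {r : Fin s → ℕ} [∀ k, NeZero (r k)] (α : Fin s → L) (j : Idx r) :
    chi α 0 j = 1 := by
  simp [chi]

theorem chi_nsmul {s : ℕ} {r : Fin s → ℕ} [∀ k, NeZero (r k)] (α : Fin s → L)
    (hα : ∀ k, IsPrimitiveRoot (α k) (r k)) (n : ℕ) (i j : Idx r) :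
    chi α (n • i) j = chi α i j ^ n := by
  induction n with
  | zero => simp [chi_zero]
  | succ n ih => rw [succ_nsmul, chi_add α hα, ih, pow_succ]

theorem chi_neg_left {s : ℕ} {r : Fin s → ℕ} [∀ k, NeZero (r k)] (α : Fin s → L)
    (hα : ∀ k, IsPrimitiveRoot (α k) (r k)) (i j : Idx r) :
    chi α (-i) j = chi α i (-j) := by
  have h1 : chi α (-i) j * chi α i j = 1 := by
    rw [← chi_add α hα, neg_add_cancel, chi_zero]
  have h2 : chi α i (-j) * chi α i j = 1 := by
    rw [chi_comm α i, chi_comm α i, ← chi_add α hα, neg_add_cancel, chi_zero]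
  have h3 : chi α i j ≠ 0 := right_ne_zero_of_mul_eq_one h1
  exact mul_right_cancel₀ h3 (h1.trans h2.symm)

theorem sum_chi_ne {s : ℕ} {r : Fin s → ℕ} [∀ k, NeZero (r k)] (α : Fin s → L)
    (hα : ∀ k, IsPrimitiveRoot (α k) (r k)) (i : Idx r) (hi : i ≠ 0) :
    ∑ j : Idx r, chi α j i = 0 := by
  obtain ⟨k, hk⟩ := Function.ne_iff.mp hi
  have hr : r k ≠ 1 := by
    intro h
    have := ZMod.subsingleton_iff.mpr h
    exact hk (Subsingleton.elim _ _)
  have hc : chi α (Pi.single k 1) i ≠ 1 := by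
    have : chi α (Pi.single k 1) i = α k ^ (i k).val := by
      rw [chi, Finset.prod_eq_single k]
      · have : Fact (1 < r k) := ⟨by have := NeZero.ne (r k); omega⟩
        rw [Pi.single_eq_same, ZMod.val_one, one_mul]
      · intro b _ hb
        simp [Pi.single_eq_of_ne hb]
      · simp
    rw [this]
    intro h
    have h2 := (hα k).pow_eq_one_iff_dvd _ |>.mp h
    have h3 := Nat.eq_zero_of_dvd_of_lt h2 (ZMod.val_lt _)
    exact hk ((ZMod.val_eq_zero _).mp h3)
  have hS : ∑ j : Idx r, chi α j i = chi α (Pi.single k 1) i * ∑ j : Idx r, chi α j i := by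
    rw [Finset.mul_sum, ← Equiv.sum_comp (Equiv.addLeft (Pi.single k 1 : Idx r))]
    exact Finset.sum_congr rfl fun j _ => by
      rw [Equiv.coe_addLeft, chi_add α hα]
  by_contra hne
  exact hc (mul_right_cancel₀ hne (by rw [one_mul]; exact hS.symm))

theorem sum_chi {s : ℕ} {r : Fin s → ℕ} [∀ k, NeZero (r k)] (α : Fin s → L)
    (hα : ∀ k, IsPrimitiveRoot (α k) (r k)) (i : Idx r) :
    ∑ j : Idx r, chi α j i = if i = 0 then (Fintype.card (Idx r) : L) else 0 := by
  split_ifs with h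
  · subst h
    simp [chi_comm α _ 0, chi_zero]
  · exact sum_chi_ne α hα i h

theorem fourier_eq {s : ℕ} {r : Fin s → ℕ} [∀ k, NeZero (r k)] (α : Fin s → L) (f : Idx r → F)
    (j : Idx r) : fourier α f j = ∑ i : Idx r, algebraMap F L (f i) * chi α i j := rfl

theorem fourier_conv {s : ℕ} {r : Fin s → ℕ} [∀ k, NeZero (r k)] (α : Fin s → L)
    (hα : ∀ k, IsPrimitiveRoot (α k) (r k)) (f g : Idx r → F) (j : Idx r) :
    fourier α (conv f g) j = fourier α f j * fourier α g j := by
  simp only [fourier_eq, conv, map_sum, map_mul]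
  simp_rw [Finset.sum_mul]
  rw [Finset.sum_comm]
  refine Finset.sum_congr rfl fun u _ => ?_
  rw [Finset.mul_sum, ← Equiv.sum_comp (Equiv.addLeft u)]
  refine Finset.sum_congr rfl fun i _ => ?_
  rw [Equiv.coe_addLeft, chi_add α hα, add_sub_cancel_left]
  ring

theorem card_ne [Fintype F] {s : ℕ} {r : Fin s → ℕ} [∀ k, NeZero (r k)]
    (hcop : ∀ k, (Fintype.card F).Coprime (r k)) :
    (Fintype.card (Idx r) : L) ≠ 0 := by
  have hc : (Fintype.card F).Coprime (Fintype.card (Idx r)) := by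
    rw [Fintype.card_pi]
    exact Nat.Coprime.prod_right fun k _ => by rw [ZMod.card]; exact hcop k
  intro h
  have h0 : ((Fintype.card F : ℕ) : L) = 0 := by
    rw [← map_natCast (algebraMap F L), FiniteField.cast_card_eq_zero, map_zero]
  have := (Nat.isCoprime_iff_coprime.mpr hc).map (Int.castRingHom L)
  simp only [Int.coe_castRingHom, Int.cast_natCast, h, h0] at this
  simp at this

theorem fourier_inv {s : ℕ} {r : Fin s → ℕ} [∀ k, NeZero (r k)] (α : Fin s → L)
    (hα : ∀ k, IsPrimitiveRoot (α k) (r k)) (f : Idx r → F) (i : Idx r) :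
    ∑ j, fourier α f j * chi α i (-j) = Fintype.card (Idx r) * algebraMap F L (f i) := by
  simp only [fourier_eq, Finset.sum_mul]
  rw [Finset.sum_comm]
  have : ∀ u : Idx r, ∑ j, algebraMap F L (f u) * chi α u j * chi α i (-j)
      = algebraMap F L (f u) * (if u - i = 0 then (Fintype.card (Idx r) : L) else 0) := by
    intro u
    rw [← sum_chi α hα, Finset.mul_sum]
    refine Finset.sum_congr rfl fun j _ => ?_
    rw [mul_assoc, ← chi_neg_left α hα, ← chi_add α hα, chi_comm, sub_eq_add_neg]
  simp only [this, sub_eq_zero]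
  simp [mul_comm]

theorem fourier_inj [Fintype F] {s : ℕ} {r : Fin s → ℕ} [∀ k, NeZero (r k)]
    (hcop : ∀ k, (Fintype.card F).Coprime (r k)) (α : Fin s → L)
    (hα : ∀ k, IsPrimitiveRoot (α k) (r k)) (f g : Idx r → F)
    (h : fourier α f = fourier α g) : f = g := by
  funext i
  have h1 := fourier_inv α hα f i
  rw [h, fourier_inv α hα g i] at h1
  exact ((algebraMap F L).injective (mul_left_cancel₀ (card_ne (F := F) hcop) h1)).symm

theorem sum_pow_q [Fintype F] {ι : Type*} (S : Finset ι) (x : ι → L) :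
    (∑ i ∈ S, x i) ^ Fintype.card F = ∑ i ∈ S, x i ^ Fintype.card F :=
  map_sum (FiniteField.frobeniusAlgHom F L) x S

theorem fourier_frob [Fintype F] {s : ℕ} {r : Fin s → ℕ} [∀ k, NeZero (r k)] (α : Fin s → L)
    (hα : ∀ k, IsPrimitiveRoot (α k) (r k)) (f : Idx r → F) (j : Idx r) :
    fourier α f (Fintype.card F • j) = fourier α f j ^ Fintype.card F := by
  simp only [fourier_eq, sum_pow_q (F := F)]
  refine Finset.sum_congr rfl fun i _ => ?_
  rw [mul_pow, ← map_pow, FiniteField.pow_card, chi_comm, chi_nsmul α hα, chi_comm]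

theorem mem_range_of_pow [Fintype F] (x : L) (h : x ^ Fintype.card F = x) :
    ∃ y : F, algebraMap F L y = x := by
  have hs : (Polynomial.X ^ Fintype.card F - Polynomial.X : Polynomial F).Splits := by
    rw [Polynomial.splits_iff_card_roots, FiniteField.roots_X_pow_card_sub_X,
      FiniteField.X_pow_card_sub_X_natDegree_eq F Fintype.one_lt_card]
    rfl
  have hne := FiniteField.X_pow_card_sub_X_ne_zero F (Fintype.one_lt_card (α := F))
  have hx : x ∈ ((Polynomial.X ^ Fintype.card F - Polynomial.X : Polynomial F).map
      (algebraMap F L)).roots := by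
    rw [Polynomial.mem_roots (Polynomial.map_ne_zero hne)]
    simp [h]
  rw [hs.roots_map] at hx
  obtain ⟨y, -, hy⟩ := Multiset.mem_map.mp hx
  exact ⟨y, hy⟩

theorem smul_inj [Fintype F] {s : ℕ} {r : Fin s → ℕ} [∀ k, NeZero (r k)]
    (hcop : ∀ k, (Fintype.card F).Coprime (r k)) :
    Function.Injective (fun j : Idx r => Fintype.card F • j) := by
  intro a b h
  funext k
  have := congrFun h k
  simp only [Pi.smul_apply, nsmul_eq_mul] at this
  exact ((ZMod.isUnit_iff_coprime _ _).mpr (hcop k)).mul_left_cancel this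

theorem fourier_surj [Fintype F] {s : ℕ} {r : Fin s → ℕ} [∀ k, NeZero (r k)]
    (hcop : ∀ k, (Fintype.card F).Coprime (r k)) (α : Fin s → L)
    (hα : ∀ k, IsPrimitiveRoot (α k) (r k)) (h : Idx r → L)
    (hh : ∀ j, h (Fintype.card F • j) = h j ^ Fintype.card F) :
    ∃ f : Idx r → F, fourier α f = h := by
  have hb := Finite.injective_iff_bijective.mp (smul_inj (F := F) hcop)
  have key : ∀ i : Idx r, ∃ y : F, algebraMap F L y =
      (Fintype.card (Idx r) : L)⁻¹ * ∑ j, h j * chi α i (-j) := by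
    intro i
    apply mem_range_of_pow
    rw [mul_pow, sum_pow_q (F := F)]
    congr 1
    · rw [← map_natCast (algebraMap F L), ← map_inv₀, ← map_pow, FiniteField.pow_card]
    · rw [← hb.sum_comp (fun j => h j * chi α i (-j))]
      refine Finset.sum_congr rfl fun j _ => ?_
      rw [hh, mul_pow, ← smul_neg, chi_comm α i (_ • _), chi_nsmul α hα, chi_comm]
  choose f hf using key
  refine ⟨f, funext fun j => ?_⟩
  rw [fourier_eq]
  simp only [hf, mul_assoc, Finset.sum_mul]
  rw [← Finset.mul_sum, Finset.sum_comm]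
  have : ∀ u : Idx r, ∑ i, h u * (chi α i (-u) * chi α i j)
      = h u * (if -u + j = 0 then (Fintype.card (Idx r) : L) else 0) := by
    intro u
    rw [← sum_chi α hα, Finset.mul_sum]
    refine Finset.sum_congr rfl fun i _ => ?_
    rw [chi_comm α i (-u), chi_comm α i j, ← chi_add α hα, chi_comm]
  have hN := card_ne (F := F) (L := L) hcop
  simp only [this, neg_add_eq_zero]
  simp only [mul_ite, mul_zero, Finset.sum_ite_eq', Finset.mem_univ, if_true]
  rw [mul_comm (h j), inv_mul_cancel_left₀ hN]

theorem afforded_smul [Fintype F] {s : ℕ} {r : Fin s → ℕ} [∀ k, NeZero (r k)]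
    (hcop : ∀ k, (Fintype.card F).Coprime (r k)) (D : Set (Idx r))
    (hD : OrbitUnion r (Fintype.card F) 1 D) (j : Idx r) :
    Fintype.card F • j ∈ D ↔ j ∈ D := by
  have hinj := smul_inj (F := F) hcop
  have hmem : ∀ a ∈ D, Fintype.card F • a ∈ D := fun a ha =>
    hD a ha ⟨1, fun k => by simp [nsmul_eq_mul]⟩
  have himg : (fun j : Idx r => Fintype.card F • j) '' D = D := by
    apply Set.eq_of_subset_of_ncard_le
    · rintro _ ⟨a, ha, rfl⟩
      exact hmem a ha
    · rw [Set.ncard_image_of_injective _ hinj]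
    · exact Set.toFinite _
  refine ⟨fun h => ?_, hmem j⟩
  rw [← himg] at h
  obtain ⟨a, ha, hab⟩ := h
  rwa [← hinj hab]

theorem fourier_idem {s : ℕ} {r : Fin s → ℕ} [∀ k, NeZero (r k)] (α : Fin s → L)
    (hα : ∀ k, IsPrimitiveRoot (α k) (r k)) (f : Idx r → F) (hf : conv f f = f) (j : Idx r) :
    fourier α f j = 0 ∨ fourier α f j = 1 := by
  have := fourier_conv α hα f f j
  rw [hf] at this
  by_cases h : fourier α f j = 0
  · exact Or.inl h
  · exact Or.inr (mul_left_cancel₀ h (by rw [mul_one]; exact this.symm))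

theorem main_aux_s2 {s : ℕ} (r : Fin s → ℕ) [∀ k, NeZero (r k)]
    {F : Type*} [Field F] [Fintype F]
    (hcop : ∀ k, (Fintype.card F).Coprime (r k))
    (L : Type*) [Field L] [Algebra F L]
    (C : Submodule F (Idx r → F))
    (e : Idx r → F) (hee : conv e e = e)
    (hgen : ∀ f, f ∈ C ↔ ∃ g : Idx r → F, f = conv g e)
    (α : Fin s → L) (hα : ∀ k, IsPrimitiveRoot (α k) (r k)) :
      dStarAlpha r α C = mad r (Fintype.card F) 1 (fourier α e) := by
  unfold dStarAlpha mad
  congr 1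
  ext d
  constructor
  · rintro ⟨f, hfC, hf0, hff, rfl⟩
    have hid := fourier_idem α hα f hff
    refine ⟨fourier α f, ⟨{j | fourier α f j = 0}, ?_, ?_⟩, ?_, ?_, rfl⟩
    · rintro a ha b ⟨n, hn⟩
      have hb : b = (Fintype.card F) ^ n • a := by
        funext k
        rw [hn k]
        simp [nsmul_eq_mul]
      subst hb
      clear hn
      induction n with
      | zero => simpa using ha
      | succ n ih =>
        rw [pow_succ', mul_smul]
        have ih' : fourier α f (Fintype.card F ^ n • a) = 0 := ih
        show fourier α f _ = 0
        rw [fourier_frob α hα, ih', zero_pow Fintype.card_ne_zero]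
    · funext j
      rcases hid j with h | h <;> simp [afforded, h]
    · intro h
      apply hf0
      apply fourier_inj hcop α hα
      rw [h]
      funext j
      simp [fourier_eq]
    · intro j hj
      obtain ⟨g, rfl⟩ := (hgen f).mp hfC
      have hj' : fourier α (conv g e) j ≠ 0 := hj
      rw [fourier_conv α hα] at hj'
      exact right_ne_zero_of_mul hj'
  · rintro ⟨P, ⟨D, hD, rfl⟩, hP0, hsub, rfl⟩
    obtain ⟨f, hf⟩ := fourier_surj (F := F) hcop α hα (afforded r D) (by
      intro j
      simp only [afforded, afforded_smul hcop D hD]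
      split_ifs <;> simp)
    refine ⟨f, ?_, ?_, ?_, by rw [hf]⟩
    · rw [hgen]
      refine ⟨f, ?_⟩
      apply fourier_inj hcop α hα
      funext j
      rw [fourier_conv α hα, hf]
      by_cases h : (afforded r D j : L) = 0
      · simp [h]
      · have h1 : fourier α e j ≠ 0 := hsub h
        rw [(fourier_idem α hα e hee j).resolve_left h1, mul_one]
    · rintro rfl
      apply hP0
      rw [← hf]
      funext j
      simp [fourier_eq]
    · apply fourier_inj hcop α hα
      funext j
      rw [fourier_conv α hα, hf]
      simp only [afforded]
      split_ifs <;> simp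

/-- Let `C` be an abelian code in `A_q(r_1,…,r_s)` and let `e` be
its generating idempotent.  Then for every `α ∈ U`,
`d_α*(C) = mad(M(φ_{α,e}))`, and consequently
`d*(C) = max {mad(M(φ_{α,e})) : α ∈ U}`. -/
theorem dStarAlpha_eq_mad_fourier_of_generating_idempotent
    {s : ℕ} (r : Fin s → ℕ) [∀ k, NeZero (r k)] (hs : 0 < s)
    {F : Type*} [Field F] [Fintype F]
    (hcop : ∀ k, (Fintype.card F).Coprime (r k))
    (L : Type*) [Field L] [Algebra F L]
    (hroots : ∀ k, ∃ ζ : L, IsPrimitiveRoot ζ (r k))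
    (C : Submodule F (Idx r → F)) (hC : IsAbelianCode C)
    (e : Idx r → F) (he : e ∈ C) (hee : conv e e = e)
    (hgen : ∀ f, f ∈ C ↔ ∃ g : Idx r → F, f = conv g e) :
    (∀ α : Fin s → L, (∀ k, IsPrimitiveRoot (α k) (r k)) →
      dStarAlpha r α C = mad r (Fintype.card F) 1 (fourier α e)) ∧
    dStarCode r L C =
      sSup {d | ∃ α : Fin s → L, (∀ k, IsPrimitiveRoot (α k) (r k)) ∧
        mad r (Fintype.card F) 1 (fourier α e) = d} := by
  have hmain : ∀ α : Fin s → L, (∀ k, IsPrimitiveRoot (α k) (r k)) →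
      dStarAlpha r α C = mad r (Fintype.card F) 1 (fourier α e) :=
    fun α hα => main_aux_s2 r hcop L C e hee hgen α hα
  refine ⟨hmain, ?_⟩
  unfold dStarCode
  congr 1
  ext d
  constructor
  · rintro ⟨α, hα, h⟩
    exact ⟨α, hα, (hmain α hα) ▸ h⟩
  · rintro ⟨α, hα, h⟩
    exact ⟨α, hα, (hmain α hα).trans h⟩

end AbelianCodes
end
end

section
/- Let M = M(D) be the q^t-orbits hypermatrix afforded by a union D of q^t-orbits, let k ∈ {1,…,s} and b ∈ Z_{r_k}, and set t' = t·|C_{q^t}(b)|, where C_{q^t}(b) = {b·q^{ti} mod r_k : i ∈ ℕ} is the q^t-cyclotomic coset of b modulo r_k. Then the set I(k,b) = {i ∈ I : i(k) = b} is closed under multiplication by q^{t'}, the set D_M(k,b) = I(k,b) \ supp(H_M(k,b)) is a union of q^{t'}-orbits, and the hypercolumn H_M(k,b), viewed as an (s−1)-dimensional hypermatrix indexed by ∏_{j≠k} Z_{r_j}, is the q^{t'}-orbits hypermatrix afforded by D_M(k,b). -/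
open Classical

noncomputable section

namespace AbelianCodes

variable {F : Type*} [Field F]

theorem cycCoset_period (r q t : ℕ) (hr : 0 < r) (hc : Nat.Coprime q r) (b : ZMod r) (n : ℕ) :
    (q : ZMod r) ^ (t * (cycCoset r q t b).ncard * n) * b = b := by
  haveI : NeZero r := ⟨hr.ne'⟩
  set u : (ZMod r)ˣ := (ZMod.unitOfCoprime q hc) ^ t with hu
  have hpow : ∀ m : ℕ, (q : ZMod r) ^ (t * m) * b = u ^ m • b := by
    intro m
    rw [hu, ← pow_mul, Units.smul_def, Units.val_pow_eq_pow_val, ZMod.coe_unitOfCoprime, smul_eq_mul]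
  have hset : cycCoset r q t b = MulAction.orbit (Subgroup.zpowers u) b := by
    ext x
    constructor
    · rintro ⟨m, rfl⟩
      exact ⟨⟨u ^ m, Subgroup.npow_mem_zpowers u m⟩, (hpow m).symm⟩
    · rintro ⟨⟨g, hg⟩, rfl⟩
      obtain ⟨m, rfl⟩ := mem_powers_iff_mem_zpowers.mpr hg
      exact ⟨m, (hpow m).symm⟩
  have hcard : (cycCoset r q t b).ncard = Function.minimalPeriod (u • ·) b := by
    rw [hset, MulAction.minimalPeriod_eq_card, ← Nat.card_eq_fintype_card]
    rfl
  rw [mul_assoc, hpow, MulAction.pow_smul_eq_iff_minimalPeriod_dvd, hcard]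
  exact dvd_mul_right _ _

/-- Let `M = M(D)` be the `q^t`-orbits hypermatrix afforded by a
union `D` of `q^t`-orbits, `k ∈ {1,…,s}`, `b ∈ Z_{r_k}`, and
`t' = t·|C_{q^t}(b)|`.  Then `I(k,b)` is closed under multiplication by `q^{t'}`,
the set `D_M(k,b) = I(k,b) \ supp(H_M(k,b))` (identified with the set
`{i : i(k ↦ b extension) ∈ D}` of `(s−1)`-tuples) is a union of `q^{t'}`-orbits,
and the hypercolumn `H_M(k,b)` is the `q^{t'}`-orbits hypermatrix afforded by it. -/
theorem hypercol_of_orbit_hypermatrix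
    {s : ℕ} (r : Fin (s+1) → ℕ)
    (p q t : ℕ) (hp : p.Prime) (hq : ∃ m : ℕ, 0 < m ∧ q = p ^ m) (ht : 0 < t)
    (hr : ∀ k, 0 < r k) (hpr : ∀ k, ¬ p ∣ r k)
    {F : Type*} [Field F]
    (D : Set (Idx r)) (hD : OrbitUnion r q t D)
    (k : Fin (s+1)) (b : ZMod (r k)) :
    (∀ n : ℕ, (q : ZMod (r k)) ^ (t * (cycCoset (r k) q t b).ncard * n) * b = b) ∧
    OrbitUnion (fun j => r (k.succAbove j)) q (t * (cycCoset (r k) q t b).ncard)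
      {i | k.insertNth b i ∈ D} ∧
    hypercol (afforded r D : Idx r → F) k b =
      afforded (fun j => r (k.succAbove j)) {i | k.insertNth b i ∈ D} := by
  have h1 : ∀ n : ℕ, (q : ZMod (r k)) ^ (t * (cycCoset (r k) q t b).ncard * n) * b = b := by
    intro n
    obtain ⟨m, _, rfl⟩ := hq
    exact cycCoset_period _ _ _ (hr k)
      (Nat.Coprime.pow_left m ((Nat.Prime.coprime_iff_not_dvd hp).mpr (hpr k))) b n
  refine ⟨h1, ?_, ?_⟩
  · rintro a ha i ⟨n, hn⟩
    refine hD _ ha ⟨(cycCoset (r k) q t b).ncard * n, fun j => ?_⟩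
    rw [← mul_assoc]
    refine Fin.succAboveCases k ?_ (fun j => ?_) j
    · simp only [Fin.insertNth_apply_same]
      exact (h1 n).symm
    · simp only [Fin.insertNth_apply_succAbove]
      exact hn j
  · funext i
    simp only [hypercol, afforded, Set.mem_setOf_eq]

end AbelianCodes
end
end

section
/- Let M be a nonzero q^t-orbits hypermatrix, k ∈ {1,…,s}, b ∈ Z_{r_k}, and let A be an (s−1)-dimensional hypermatrix indexed by ∏_{j≠k} Z_{r_j} such that supp(A) ⊆ supp(H_M(k,b)). Then there exists a q^t-orbits hypermatrix N ≤ M such that: (1) supp(H_N(k,b)) ⊆ supp(A); (2) if P < M is a q^t-orbits hypermatrix with supp(H_P(k,b)) ⊆ supp(A), then P ≤ N; and (3) if A is a q^{t·|C_{q^t}(b)|}-orbits hypermatrix, where C_{q^t}(b) is the q^t-cyclotomic coset of b modulo r_k, then A = H_N(k,b). Hence N is the q^t-orbits hypermatrix with maximum support such that supp(H_N(k,b)) ⊆ supp(A). -/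
open Classical

noncomputable section

namespace AbelianCodes

variable {F : Type*} [Field F]

lemma coset_ncard_dvd (r q t : ℕ) (b : ZMod r) (n : ℕ)
    (h : b = (q : ZMod r) ^ (t * n) * b) : (cycCoset r q t b).ncard ∣ n := by
  set f : ZMod r → ZMod r := fun x => (q : ZMod r) ^ t * x with hf
  have hit : ∀ j : ℕ, f^[j] b = (q : ZMod r) ^ (t * j) * b := by
    intro j
    induction j with
    | zero => simp
    | succ j ih =>
      rw [Function.iterate_succ_apply', ih, hf]
      ring
  have hper : Function.IsPeriodicPt f n b := by
    show f^[n] b = b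
    rw [hit]; exact h.symm
  rcases Nat.eq_zero_or_pos n with rfl | hn
  · exact dvd_zero _
  have hset : cycCoset r q t b = (fun j => f^[j] b) '' Set.Iio (Function.minimalPeriod f b) := by
    ext x
    constructor
    · rintro ⟨j, rfl⟩
      refine ⟨j % Function.minimalPeriod f b,
        Nat.mod_lt _ (hper.minimalPeriod_pos hn), ?_⟩
      show f^[_] b = _
      rw [Function.iterate_mod_minimalPeriod_eq, hit]
    · rintro ⟨j, -, rfl⟩
      exact ⟨j, hit j⟩
  have hcard : (cycCoset r q t b).ncard = Function.minimalPeriod f b := by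
    rw [hset, Set.ncard_image_of_injOn Function.iterate_injOn_Iio_minimalPeriod]
    rw [← Finset.coe_Iio, Set.ncard_coe_finset, Nat.card_Iio]
  rw [hcard]
  exact hper.minimalPeriod_dvd

lemma mem_hsupp_afforded {s : ℕ} (r : Fin s → ℕ) (D : Set (Idx r)) (i : Idx r) :
    i ∈ hsupp (afforded (F := F) r D) ↔ i ∉ D := by
  simp [hsupp, afforded]

/-- Let `M` be a nonzero `q^t`-orbits hypermatrix, `k`, `b`, and
let `A` be an `(s−1)`-dimensional hypermatrix with `supp(A) ⊆ supp(H_M(k,b))`.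
Then there is a `q^t`-orbits hypermatrix `N ≤ M` such that
(1) `supp(H_N(k,b)) ⊆ supp(A)`;
(2) if `P < M` is a `q^t`-orbits hypermatrix with `supp(H_P(k,b)) ⊆ supp(A)` then
`P ≤ N`; and
(3) if `A` is a `q^{t·|C_{q^t}(b)|}`-orbits hypermatrix then `A = H_N(k,b)`. -/
theorem exists_max_support_hypermatrix
    {s : ℕ} (r : Fin (s+1) → ℕ)
    (p q t : ℕ) (hp : p.Prime) (hq : ∃ m : ℕ, 0 < m ∧ q = p ^ m) (ht : 0 < t)
    (hr : ∀ k, 0 < r k) (hpr : ∀ k, ¬ p ∣ r k)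
    {F : Type*} [Field F]
    (M : Idx r → F) (hM : IsOrbitMx r q t M) (hM0 : M ≠ 0)
    (k : Fin (s+1)) (b : ZMod (r k))
    (A : Idx (fun j => r (k.succAbove j)) → F)
    (hA : hsupp A ⊆ hsupp (hypercol M k b)) :
    ∃ N : Idx r → F, IsOrbitMx r q t N ∧ hsupp N ⊆ hsupp M ∧
      hsupp (hypercol N k b) ⊆ hsupp A ∧
      (∀ P : Idx r → F, IsOrbitMx r q t P → hsupp P ⊂ hsupp M →
        hsupp (hypercol P k b) ⊆ hsupp A → hsupp P ⊆ hsupp N) ∧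
      (IsOrbitMx (fun j => r (k.succAbove j)) q (t * (cycCoset (r k) q t b).ncard) A →
        A = hypercol N k b) := by
  obtain ⟨DM, hDM, rfl⟩ := hM
  set D : Set (Idx r) := DM ∪ {i | ∃ (n : ℕ) (c : Idx (fun j => r (k.succAbove j))), A c = 0 ∧
    ∀ l, i l = (q : ZMod (r l)) ^ (t * n) *
      (k.insertNth (α := fun l => ZMod (r l)) b c : Idx r) l} with hD
  have hin : ∀ c, A c = 0 → (k.insertNth (α := fun l => ZMod (r l)) b c : Idx r) ∈ D := by
    intro c hc
    exact Or.inr ⟨0, c, hc, fun l => by simp⟩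
  refine ⟨afforded r D, ⟨D, ?_, rfl⟩, ?_, ?_, ?_, ?_⟩
  · rintro a ha i ⟨n, hn⟩
    rcases ha with ha | ⟨m, c, hc, hm⟩
    · exact Or.inl (hDM a ha ⟨n, hn⟩)
    · refine Or.inr ⟨n + m, c, hc, fun l => ?_⟩
      rw [hn, hm]; ring
  · intro i hi
    rw [mem_hsupp_afforded] at hi ⊢
    exact fun h => hi (Or.inl h)
  · intro c hc h0
    exact (mem_hsupp_afforded r D _).1 hc (hin c h0)
  · rintro P ⟨DP, hDP, rfl⟩ hPM hPA i hi
    rw [mem_hsupp_afforded]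
    have hi' := (mem_hsupp_afforded r DP i).1 hi
    rintro (h | ⟨n, c, hc, hn⟩)
    · exact (mem_hsupp_afforded r DM i).1 (hPM.1 hi) h
    · by_cases hcP : (k.insertNth (α := fun l => ZMod (r l)) b c : Idx r) ∈ DP
      · exact hi' (hDP _ hcP ⟨n, hn⟩)
      · have : c ∈ hsupp (hypercol (afforded (F := F) r DP) k b) :=
          (mem_hsupp_afforded r DP _).2 hcP
        exact hPA this hc
  · rintro ⟨D', hD', hAD⟩
    have hA0 : ∀ c, A c = 0 ↔ c ∈ D' := by
      intro c
      rw [hAD]; simp [afforded]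
    funext c
    by_cases hc : A c = 0
    · have := hin c hc
      rw [hc]
      simp [hypercol, afforded, this]
    · have hnot : (k.insertNth (α := fun l => ZMod (r l)) b c : Idx r) ∉ D := by
        rintro (h | ⟨n, c', hc', hn⟩)
        · exact (mem_hsupp_afforded r DM _).1 (hA hc) h
        · have hk := hn k
          simp only [Fin.insertNth_apply_same] at hk
          obtain ⟨m, rfl⟩ := coset_ncard_dvd (r k) q t b n hk
          apply hc
          rw [hA0]
          refine hD' c' ((hA0 c').1 hc') ⟨m, fun j => ?_⟩
          have hj := hn (k.succAbove j)
          simp only [Fin.insertNth_apply_succAbove] at hj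
          rw [hj, mul_assoc]
      have h1 : A c = 1 := by
        have : c ∉ D' := fun h => hc ((hA0 c).2 h)
        rw [hAD]; simp [afforded, this]
      rw [h1]
      simp [hypercol, afforded, hnot]

end AbelianCodes
end
end

section
/- Let s = 1 and let M be a nonzero q^t-orbits vector indexed by Z_r. Then mad(M) = d*(M); equivalently, if P and M are q^t-orbits vectors with P < M and d*(P) < d*(M), then P = 0. -/
open Classical

noncomputable section

namespace AbelianCodes

variable {F : Type*} [Field F]

theorem hypercol_zero_iff {r₀ : ℕ} (M : Idx (fun _ : Fin 1 => r₀) → F) (k : Fin 1)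
    (b : ZMod r₀) : hypercol (r := fun _ : Fin 1 => r₀) M k b = 0 ↔ M (fun _ => b) = 0 := by
  have key : ∀ i, hypercol (r := fun _ : Fin 1 => r₀) M k b i = M (fun _ => b) := by
    intro i
    unfold hypercol
    congr 1
    funext x
    have hx : x = k := Subsingleton.elim (α := Fin 1) x k
    subst hx
    simp
  constructor
  · intro h
    rw [← key finZeroElim, h]; rfl
  · intro h
    funext i
    rw [key, h]; rfl

theorem apd_zero_ite {r : Fin 0 → ℕ} (M : Idx r → F) :
    apd r M = if M = 0 then 0 else 1 := by
  have : M finZeroElim = 0 ↔ M = 0 := by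
    constructor
    · intro h
      funext i
      rw [Subsingleton.elim i finZeroElim, h]; rfl
    · intro h
      rw [h]; rfl
  simp only [apd, this]

theorem mem_filter_aux {α : Type*} {p : α → Prop} {inst : DecidablePred p} {s : Finset α} {a : α} :
    a ∈ @Finset.filter α p inst s ↔ a ∈ s ∧ p a := Finset.mem_filter

theorem apd_mono {r₀ : ℕ} (hr : 0 < r₀) (M P : Idx (fun _ : Fin 1 => r₀) → F)
    (hP : P ≠ 0) (hPM : hsupp P ⊆ hsupp M) :
    apd (fun _ => r₀) M ≤ apd (fun _ => r₀) P := by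
  haveI : NeZero r₀ := ⟨hr.ne'⟩
  rw [apd]
  refine Finset.sup_le fun k _ => Finset.sup_le fun b _ => ?_
  rw [apd_zero_ite]
  split_ifs with hb
  · simp
  have hz : ∀ x : ZMod r₀, M (fun _ => x) = 0 → P (fun _ => x) = 0 := by
    intro x hx
    by_contra h
    exact hPM (show (fun _ => x) ∈ hsupp P from h) hx
  have hex : ∃ j : ℕ, P (fun _ => ((b : ℕ) : ZMod r₀) - (j : ZMod r₀)) ≠ 0 := by
    obtain ⟨i, hi⟩ := Function.ne_iff.mp hP
    refine ⟨(((b : ℕ) : ZMod r₀) - i 0).val, ?_⟩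
    rw [ZMod.natCast_zmod_val, sub_sub_cancel]
    have : (fun _ => i 0) = i := by
      funext x
      rw [Subsingleton.elim x 0]
    rw [this]
    exact hi
  let j := Nat.find hex
  have hj : P (fun _ => ((b : ℕ) : ZMod r₀) - (j : ZMod r₀)) ≠ 0 := Nat.find_spec hex
  have hmin : ∀ m < j, P (fun _ => ((b : ℕ) : ZMod r₀) - (m : ZMod r₀)) = 0 := by
    intro m hm
    have := Nat.find_min hex hm
    simpa using this
  let c : ZMod r₀ := ((b : ℕ) : ZMod r₀) - (j : ZMod r₀)
  have hrun : runLen (r := fun _ : Fin 1 => r₀) M k ((b : ℕ) : ZMod r₀) ≤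
      runLen (r := fun _ : Fin 1 => r₀) P k c := by
    unfold runLen
    refine Finset.card_le_card ?_
    intro n hn
    replace hn := mem_filter_aux.mp hn
    refine mem_filter_aux.mpr ⟨hn.1, fun m hm => ?_⟩
    rw [Finset.mem_Icc] at hm
    refine (hypercol_zero_iff P k (c + (m : ZMod r₀))).mpr ?_
    by_cases hmj : m ≤ j
    · have := hmin (j - m) (by omega)
      rw [Nat.cast_sub hmj] at this
      have e : c + (m : ZMod r₀) = ((b : ℕ) : ZMod r₀) - ((j : ZMod r₀) - (m : ZMod r₀)) := by
        simp only [c]; ring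
      rw [e]; exact this
    · have := (hypercol_zero_iff M k _).mp (hn.2 (m - j) (by rw [Finset.mem_Icc]; omega))
      rw [Nat.cast_sub (by omega)] at this
      have e : c + (m : ZMod r₀) = ((b : ℕ) : ZMod r₀) + ((m : ZMod r₀) - (j : ZMod r₀)) := by
        simp only [c]; ring
      rw [e]; exact hz _ this
  have hc : (((⟨c.val, ZMod.val_lt c⟩ : Fin r₀) : ℕ) : ZMod r₀) = c := ZMod.natCast_zmod_val c
  have h1 : runLen (r := fun _ : Fin 1 => r₀) P k c + 1 ≤ apd (fun _ => r₀) P := by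
    rw [apd]
    refine le_trans ?_ (Finset.le_sup (Finset.mem_univ k))
    refine le_trans ?_ (Finset.le_sup (Finset.mem_univ (⟨c.val, ZMod.val_lt c⟩ : Fin r₀)))
    rw [hc, apd_zero_ite, if_neg]
    · simp
    · exact fun h => hj ((hypercol_zero_iff P k c).mp h)
  omega

/-- For `s = 1`: a nonzero `q^t`-orbits vector `M` satisfies
`mad(M) = d*(M)`; equivalently, any `q^t`-orbits vector `P < M` with
`d*(P) < d*(M)` is zero. -/
theorem mad_eq_apd_of_vector
    (r₀ : ℕ)
    (p q t : ℕ) (hp : p.Prime) (hq : ∃ m : ℕ, 0 < m ∧ q = p ^ m) (ht : 0 < t)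
    (hr : 0 < r₀) (hpr : ¬ p ∣ r₀)
    {F : Type*} [Field F]
    (M : Idx (fun _ : Fin 1 => r₀) → F)
    (hM : IsOrbitMx (fun _ => r₀) q t M) (hM0 : M ≠ 0) :
    mad (fun _ => r₀) q t M = apd (fun _ => r₀) M ∧
    ∀ P : Idx (fun _ : Fin 1 => r₀) → F, IsOrbitMx (fun _ => r₀) q t P →
      hsupp P ⊂ hsupp M → apd (fun _ => r₀) P < apd (fun _ => r₀) M → P = 0 := by
  refine ⟨le_antisymm (Nat.sInf_le ⟨M, hM, hM0, subset_rfl, rfl⟩) ?_, ?_⟩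
  · refine le_csInf ⟨_, M, hM, hM0, subset_rfl, rfl⟩ ?_
    rintro d ⟨P, _, hP0, hPM, rfl⟩
    exact apd_mono hr M P hP0 hPM
  · intro P _ hPM hlt
    by_contra h
    exact absurd (apd_mono hr M P h hPM.subset) (not_le.mpr hlt)

end AbelianCodes
end
end

section
/- Let D be a union of q^t-orbits such that M = M(D) ≠ 0, and let H_M(k,b) be an involved hypercolumn in the computation of d*(M), with 1 ≤ k ≤ s and b ∈ Z_{r_k}. If P is a q^t-orbits hypermatrix with P < M and d*(P) < d*(M), then d*(H_P(k,b)) < d*(H_M(k,b)); consequently, H_P(k,b) < H_M(k,b) as q^{t·|C_{q^t}(b)|}-orbits hypermatrices, where C_{q^t}(b) is the q^t-cyclotomic coset of b modulo r_k. -/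
open Classical

noncomputable section

namespace AbelianCodes

variable {F : Type*} [Field F]

/-- Let `M = M(D) ≠ 0` be a `q^t`-orbits hypermatrix and let
`H_M(k,b)` be an involved hypercolumn in the computation of `d*(M)`.  If `P` is a
`q^t`-orbits hypermatrix with `P < M` and `d*(P) < d*(M)`, then
`d*(H_P(k,b)) < d*(H_M(k,b))`; consequently `H_P(k,b) < H_M(k,b)` as
`q^{t·|C_{q^t}(b)|}`-orbits hypermatrices. -/
theorem apd_hypercol_lt_of_involved
    {s : ℕ} (r : Fin (s+1) → ℕ)
    (p q t : ℕ) (hp : p.Prime) (hq : ∃ m : ℕ, 0 < m ∧ q = p ^ m) (ht : 0 < t)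
    (hr : ∀ k, 0 < r k) (hpr : ∀ k, ¬ p ∣ r k)
    {F : Type*} [Field F]
    (M : Idx r → F) (hM : IsOrbitMx r q t M) (hM0 : M ≠ 0)
    (k : Fin (s+1)) (b : ZMod (r k))
    (hcol : hypercol M k b ≠ 0)
    (hinv : apd r M =
      (runLen M k b + 1) * apd (fun j => r (k.succAbove j)) (hypercol M k b))
    (P : Idx r → F) (hP : IsOrbitMx r q t P)
    (hPM : hsupp P ⊂ hsupp M) (hPd : apd r P < apd r M) :
    apd (fun j => r (k.succAbove j)) (hypercol P k b) <
      apd (fun j => r (k.succAbove j)) (hypercol M k b) ∧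
    hsupp (hypercol P k b) ⊂ hsupp (hypercol M k b) := by
  have hsub : ∀ (c : ZMod (r k)), hypercol M k c = 0 → hypercol P k c = 0 := by
    intro c hc
    funext i
    by_contra h
    exact (hPM.1 (show k.insertNth c i ∈ hsupp P from h)) (congrFun hc i)
  have hrun : runLen M k b ≤ runLen P k b := by
    unfold runLen
    apply Finset.card_le_card
    intro j hj
    simp only [Finset.mem_filter] at hj ⊢
    exact ⟨hj.1, fun m hm => hsub _ (hj.2 m hm)⟩
  have hle : (runLen P k b + 1) * apd (fun j => r (k.succAbove j)) (hypercol P k b)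
      ≤ apd r P := by
    haveI : NeZero (r k) := ⟨(hr k).ne'⟩
    have hb : (((⟨b.val, ZMod.val_lt b⟩ : Fin (r k)) : ℕ) : ZMod (r k)) = b :=
      ZMod.natCast_zmod_val b
    rw [apd]
    refine le_trans ?_ (Finset.le_sup (Finset.mem_univ k))
    refine le_trans ?_ (Finset.le_sup
      (Finset.mem_univ (⟨b.val, ZMod.val_lt b⟩ : Fin (r k))))
    rw [hb]
  have hlt : apd (fun j => r (k.succAbove j)) (hypercol P k b) <
      apd (fun j => r (k.succAbove j)) (hypercol M k b) := by
    by_contra h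
    push Not at h
    have h2 := Nat.mul_le_mul (Nat.succ_le_succ hrun) h
    simp only [Nat.succ_eq_add_one] at h2
    omega
  refine ⟨hlt, fun i hi => hPM.1 hi, fun hsup => ?_⟩
  have heq : hypercol P k b = hypercol M k b := by
    funext i
    have h1 : hypercol M k b i ≠ 0 → hypercol P k b i ≠ 0 := fun h => hsup h
    have h2 : hypercol P k b i ≠ 0 → hypercol M k b i ≠ 0 :=
      fun h => hPM.1 (show k.insertNth b i ∈ hsupp P from h)
    obtain ⟨D, -, rfl⟩ := hM
    obtain ⟨E, -, rfl⟩ := hP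
    simp only [hypercol, afforded] at h1 h2 ⊢
    split_ifs at h1 h2 ⊢ <;> simp_all
  rw [heq] at hlt
  exact lt_irrefl _ hlt

end AbelianCodes
end
end
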